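/- arXiv:1003.4121 — 2 statements merged into one kernel-verified Lean document; each statement's English description precedes it below -/
import Mathlib

section
/- Let n ≥ 3 be an integer and let p be a real number with 1 < p < n/(n-2). Define σ(x) = p(n+2) / (2·(x·(2p - pn + n) + np)) for x > 0. Then there exists θ ∈ (0,1) such that for every real r > 1 and every natural number k, σ(2^k · r) ≤ θ^k · σ(r). (Paper's Lemma 4.2.) -/
/-- Paper's Lemma 4.2: for `n ≥ 3` and `1 < p < n/(n-2)`, with
`σ x = p(n+2)/(2(x(2p - pn + n) + np))`, there is `θ ∈ (0,1)` such that
`σ(2^k r) ≤ θ^k σ(r)` for all `r > 1` and all `k ∈ ℕ`. -/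
theorem stmt_0 (n : ℕ) (hn : 3 ≤ n) (p : ℝ) (hp1 : 1 < p)
    (hp2 : p < (n : ℝ) / ((n : ℝ) - 2))
    (σ : ℝ → ℝ)
    (hσ : ∀ x : ℝ, σ x = p * ((n : ℝ) + 2) /
      (2 * (x * (2 * p - p * (n : ℝ) + (n : ℝ)) + (n : ℝ) * p))) :
    ∃ θ : ℝ, θ ∈ Set.Ioo (0 : ℝ) 1 ∧
      ∀ r : ℝ, 1 < r → ∀ k : ℕ, σ ((2 : ℝ) ^ k * r) ≤ θ ^ k * σ r := by
  have hn' : (3 : ℝ) ≤ n := by exact_mod_cast hn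
  have ha : 0 < 2 * p - p * (n : ℝ) + (n : ℝ) := by
    rw [lt_div_iff₀ (by linarith)] at hp2
    linarith
  have hb : 0 < (n : ℝ) * p := by positivity
  have hc : 0 < p * ((n : ℝ) + 2) := by positivity
  generalize 2 * p - p * (n : ℝ) + (n : ℝ) = a at *
  generalize (n : ℝ) * p = b at *
  generalize p * ((n : ℝ) + 2) = c at *
  have step : ∀ x : ℝ, 1 ≤ x → σ (2 * x) ≤ (a + b) / (2 * a + b) * σ x := by
    intro x hx
    have hx0 : 0 < x := by linarith
    rw [hσ, hσ, div_mul_div_comm, div_le_div_iff₀ (by positivity) (by positivity)]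
    have key : (x * a + b) * (2 * a + b) ≤ (a + b) * (2 * x * a + b) := by
      nlinarith [mul_nonneg (sub_nonneg.2 hx) (mul_pos ha hb).le]
    nlinarith [mul_le_mul_of_nonneg_left key hc.le]
  refine ⟨(a + b) / (2 * a + b), ⟨by positivity, ?_⟩, ?_⟩
  · rw [div_lt_one (by positivity)]
    linarith
  · intro r hr k
    induction k with
    | zero => simp
    | succ k ih =>
      have h1 : (1 : ℝ) ≤ 2 ^ k * r :=
        one_le_mul_of_one_le_of_one_le (one_le_pow₀ (by norm_num)) hr.le
      have h2 := step _ h1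
      have h3 : (2 : ℝ) ^ (k + 1) * r = 2 * (2 ^ k * r) := by ring
      rw [h3]
      refine h2.trans ?_
      rw [pow_succ', mul_assoc]
      exact mul_le_mul_of_nonneg_left ih (by positivity)
end

section
/- Let c₁, c₂, c₃ be positive real numbers, define σ(x) = c₁/(x·c₂ + c₃) for x > 0, and set θ = 1 - c₂/(2c₂ + c₃). Then θ ∈ (0,1) and for every real r ≥ 1 and every natural number k, σ(2^k · r) ≤ θ^k · σ(r). (Core claim in the proof of the paper's Lemma 4.2.) -/
/-- Core claim in the proof of the paper's Lemma 4.2: for positive `c₁ c₂ c₃`,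
`σ x = c₁/(x c₂ + c₃)` and `θ = 1 - c₂/(2c₂ + c₃)`, we have `θ ∈ (0,1)` and
`σ(2^k r) ≤ θ^k σ(r)` for every `r ≥ 1` and `k ∈ ℕ`. -/
theorem stmt_1 (c₁ c₂ c₃ : ℝ) (h₁ : 0 < c₁) (h₂ : 0 < c₂) (h₃ : 0 < c₃)
    (σ : ℝ → ℝ) (hσ : ∀ x : ℝ, σ x = c₁ / (x * c₂ + c₃))
    (θ : ℝ) (hθ : θ = 1 - c₂ / (2 * c₂ + c₃)) :
    θ ∈ Set.Ioo (0 : ℝ) 1 ∧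
      ∀ r : ℝ, 1 ≤ r → ∀ k : ℕ, σ ((2 : ℝ) ^ k * r) ≤ θ ^ k * σ r := by
  have hD : 0 < 2 * c₂ + c₃ := by positivity
  have hθ' : θ = (c₂ + c₃) / (2 * c₂ + c₃) := by
    rw [hθ]; field_simp; ring
  have hpos : 0 < θ := by rw [hθ']; positivity
  have hstep : ∀ s : ℝ, 1 ≤ s → σ (2 * s) ≤ θ * σ s := by
    intro s hs
    have hs0 : 0 < s := by linarith
    rw [hσ, hσ, hθ', div_mul_div_comm, div_le_div_iff₀ (by positivity) (by positivity)]
    have h := mul_nonneg h₁.le (mul_nonneg (sub_nonneg.2 hs) (mul_pos h₂ h₃).le)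
    nlinarith [h]
  refine ⟨⟨hpos, ?_⟩, ?_⟩
  · have : 0 < c₂ / (2 * c₂ + c₃) := by positivity
    linarith
  · intro r hr k
    induction k with
    | zero => simp
    | succ k ih =>
      have h1 : (1 : ℝ) ≤ 2 ^ k * r :=
        one_le_mul_of_one_le_of_one_le (one_le_pow₀ (by norm_num)) hr
      calc σ (2 ^ (k + 1) * r) = σ (2 * (2 ^ k * r)) := by congr 1; ring
        _ ≤ θ * σ (2 ^ k * r) := hstep _ h1
        _ ≤ θ * (θ ^ k * σ r) := mul_le_mul_of_nonneg_left ih hpos.le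
        _ = θ ^ (k + 1) * σ r := by ring
end
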